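/- arXiv:2601.12059 — 2 statements merged into one kernel-verified Lean document; each statement's English description precedes it below -/
import Mathlib

section
/- Let 0 → A →f B →g C → 0 be a short exact sequence of R-modules. Then the sequence is almost pure if and only if the following holds: for all n, m ∈ ℕ, all elements a_1, …, a_n ∈ A, all scalars r_{ij} ∈ R (1 ≤ i ≤ n, 1 ≤ j ≤ m), if there exist b_1, …, b_m ∈ B with f(a_i) = Σ_{j=1}^m r_{ij} b_j for all i, then for every s ∈ m there exist x_1, …, x_m ∈ A with s·a_i = Σ_{j=1}^m r_{ij} x_j for all i. -/
universe u

/-- A short exact sequence `0 → A →f B → C → 0` is almost pure if for every module `M`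
the kernel of `M ⊗ A → M ⊗ B` is almost zero. -/
def IsAlmostPure {R : Type u} [CommRing R] (m : Ideal R)
    {A B : Type u} [AddCommGroup A] [Module R A] [AddCommGroup B] [Module R B]
    (f : A →ₗ[R] B) : Prop :=
  ∀ (M : Type u) [AddCommGroup M] [Module R M],
    ∀ s ∈ m, ∀ x ∈ LinearMap.ker (LinearMap.lTensor M f), s • x = 0

open TensorProduct in
theorem aux_exists_sum {R : Type u} [CommRing R] {M A : Type u} [AddCommGroup M] [Module R M]
    [AddCommGroup A] [Module R A] {n : ℕ} (v : Fin n → M)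
    (hv : Submodule.span R (Set.range v) = ⊤) (t : M ⊗[R] A) :
    ∃ a : Fin n → A, t = ∑ i, v i ⊗ₜ[R] a i := by
  induction t with
  | zero => exact ⟨0, by simp⟩
  | tmul x y =>
    have hx : x ∈ Submodule.span R (Set.range v) := hv ▸ Submodule.mem_top
    obtain ⟨c, rfl⟩ := (Submodule.mem_span_range_iff_exists_fun R).1 hx
    exact ⟨fun i => c i • y, by simp [TensorProduct.sum_tmul, TensorProduct.smul_tmul]⟩
  | add x y hx hy =>
    obtain ⟨a, rfl⟩ := hx
    obtain ⟨b, rfl⟩ := hy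
    exact ⟨a + b, by simp [TensorProduct.tmul_add, Finset.sum_add_distrib]⟩

/-- The equational criterion for almost purity. -/
theorem almostPure_iff_equations
    {R : Type u} [CommRing R] (m : Ideal R) (hm : m * m = m)
    {A B C : Type u} [AddCommGroup A] [Module R A] [AddCommGroup B] [Module R B]
    [AddCommGroup C] [Module R C]
    (f : A →ₗ[R] B) (g : B →ₗ[R] C)
    (hf : Function.Injective f) (hg : Function.Surjective g)
    (hfg : LinearMap.range f = LinearMap.ker g) :
    IsAlmostPure m f ↔
      (∀ (n k : ℕ) (a : Fin n → A) (r : Fin n → Fin k → R),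
        (∃ b : Fin k → B, ∀ i, f (a i) = ∑ j, r i j • b j) →
          ∀ s ∈ m, ∃ x : Fin k → A, ∀ i, s • a i = ∑ j, r i j • x j) := by
  constructor
  · intro h n k a r ⟨b, hb⟩ s hs
    let N : Submodule R (Fin n → R) := Submodule.span R (Set.range fun j i => r i j)
    let e : Fin n → (Fin n → R) ⧸ N := fun i => N.mkQ (Pi.single i 1)
    have hsum : ∀ c : Fin n → R, ∑ i, c i • e i = N.mkQ c := by
      intro c
      simp only [e]
      simp_rw [← map_smul, ← map_sum]
      congr 1
      ext i
      simp [Finset.sum_apply, Pi.single_apply]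
    have he : Submodule.span R (Set.range e) = ⊤ := by
      rw [eq_top_iff]
      intro x _
      obtain ⟨c, rfl⟩ := N.mkQ_surjective x
      exact (Submodule.mem_span_range_iff_exists_fun R).2 ⟨c, hsum c⟩
    have h0 : ∑ i, e i ⊗ₜ[R] f (a i) = 0 := by
      apply TensorProduct.sum_tmul_eq_zero_of_vanishesTrivially
      refine ⟨k, r, b, hb, fun j => ?_⟩
      rw [hsum (fun i => r i j), ← LinearMap.mem_ker, Submodule.ker_mkQ]
      exact Submodule.subset_span ⟨j, rfl⟩
    have h1 := h ((Fin n → R) ⧸ N) s hs (∑ i, e i ⊗ₜ[R] a i) (by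
      simpa [LinearMap.mem_ker, map_sum] using h0)
    have h2 : ∑ i, e i ⊗ₜ[R] (s • a i) = 0 := by
      simpa [Finset.smul_sum, TensorProduct.tmul_smul] using h1
    obtain ⟨l, c, y, hy, hc⟩ := TensorProduct.vanishesTrivially_of_sum_tmul_eq_zero R he h2
    have hd : ∀ p, ∃ d : Fin k → R, ∑ j, d j • (fun i => r i j) = fun i => c i p := by
      intro p
      apply (Submodule.mem_span_range_iff_exists_fun R).1
      have := hc p
      rwa [hsum (fun i => c i p), ← LinearMap.mem_ker, Submodule.ker_mkQ] at this
    choose d hd using hd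
    refine ⟨fun j => ∑ p, d p j • y p, fun i => ?_⟩
    have hci : ∀ p, c i p = ∑ j, d p j * r i j := by
      intro p
      have := congrFun (hd p) i
      simpa [Finset.sum_apply] using this.symm
    refine (hy i).trans ?_
    simp_rw [hci, Finset.sum_smul, Finset.smul_sum, smul_smul]
    rw [Finset.sum_comm]
    simp_rw [mul_comm]
  · intro h M _ _ s hs x hx
    obtain ⟨P, hP, t, rfl⟩ := TensorProduct.exists_of_fg x
    have hu : LinearMap.rTensor B P.subtype (LinearMap.lTensor P f t) = 0 := by
      rw [LinearMap.mem_ker] at hx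
      rw [← hx, ← LinearMap.comp_apply, ← LinearMap.comp_apply, LinearMap.rTensor_comp_lTensor,
        LinearMap.lTensor_comp_rTensor]
    obtain ⟨Q, hPQ, hQ, h0⟩ := TensorProduct.eq_zero_of_fg_of_subtype_eq_zero hP hu
    have hxt : LinearMap.rTensor A P.subtype t
        = LinearMap.rTensor A Q.subtype (LinearMap.rTensor A (Submodule.inclusion hPQ) t) := by
      rw [← LinearMap.comp_apply, ← LinearMap.rTensor_comp, Submodule.subtype_comp_inclusion]
    have h1 : LinearMap.lTensor Q f (LinearMap.rTensor A (Submodule.inclusion hPQ) t) = 0 := by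
      rw [← h0, ← LinearMap.comp_apply, ← LinearMap.comp_apply, LinearMap.rTensor_comp_lTensor,
        LinearMap.lTensor_comp_rTensor]
    rw [hxt, ← map_smul]
    generalize LinearMap.rTensor A (Submodule.inclusion hPQ) t = w at h1
    have : Module.Finite R Q := Module.Finite.iff_fg.2 hQ
    obtain ⟨n, v, hv⟩ := Module.Finite.exists_fin (R := R) (M := Q)
    obtain ⟨a, rfl⟩ := aux_exists_sum v hv w
    simp only [map_sum, LinearMap.lTensor_tmul] at h1
    obtain ⟨k, r, b, hb, hr⟩ := TensorProduct.vanishesTrivially_of_sum_tmul_eq_zero R hv h1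
    obtain ⟨y, hy⟩ := h n k a r ⟨b, hb⟩ s hs
    have h3 : ∑ i, v i ⊗ₜ[R] (s • a i) = 0 :=
      TensorProduct.sum_tmul_eq_zero_of_vanishesTrivially R ⟨k, r, y, hy, hr⟩
    have h4 : s • ∑ i, v i ⊗ₜ[R] a i = 0 := by
      simpa [Finset.smul_sum, TensorProduct.tmul_smul] using h3
    rw [h4, map_zero]
end

section
/- The following are equivalent: (1) R is almost coherent; (2) every product ∏_{i∈I} F_i of almost flat R-modules is almost flat; (3) every product of flat R-modules is almost flat; (4) every product of projective R-modules is almost flat; (5) for every index set I, the product ∏_{i∈I} R of copies of R is almost flat. -/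
universe u

open CategoryTheory

/-- A module `F` is almost flat if `Tor₁ᴿ(N, F)` is almost zero for every module `N`. -/
def IsAlmostFlat {R : Type u} [CommRing R] (m : Ideal R)
    (F : Type u) [AddCommGroup F] [Module R F] : Prop :=
  ∀ (N : Type u) [AddCommGroup N] [Module R N],
    ∀ s ∈ m, ∀ x : ((Tor (ModuleCat.{u} R) 1).obj (ModuleCat.of R N)).obj (ModuleCat.of R F),
      s • x = 0

/-- A module `M` is almost finitely generated (relative to the ideal `m`). -/
def IsAlmostFG {R : Type u} [CommRing R] (m : Ideal R)
    (M : Type u) [AddCommGroup M] [Module R M] : Prop :=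
  ∀ s ∈ m, ∃ (n : ℕ) (f : (Fin n → R) →ₗ[R] M), ∀ y : M, s • y ∈ LinearMap.range f

/-- A module `M` is almost finitely presented (relative to the ideal `m`). -/
def IsAlmostFP {R : Type u} [CommRing R] (m : Ideal R)
    (M : Type u) [AddCommGroup M] [Module R M] : Prop :=
  ∀ s ∈ m, ∀ t ∈ m, ∃ (n k : ℕ) (g : (Fin k → R) →ₗ[R] (Fin n → R))
    (f : (Fin n → R) →ₗ[R] M),
      f ∘ₗ g = 0 ∧ (∀ y : M, s • y ∈ LinearMap.range f) ∧
        (∀ x ∈ LinearMap.ker f, t • x ∈ LinearMap.range g)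

/-- `R` is almost coherent: every almost finitely generated ideal is
almost finitely presented. -/
def IsAlmostCoherent {R : Type u} [CommRing R] (m : Ideal R) : Prop :=
  ∀ I : Ideal R, IsAlmostFG m I → IsAlmostFP m I

open scoped TensorProduct

lemma smul_zero_iff_of_iso {R : Type u} [CommRing R] {A B : ModuleCat.{u} R} (e : A ≅ B) (s : R) :
    (∀ x : A, s • x = 0) ↔ (∀ x : B, s • x = 0) := by
  constructor
  · intro h x
    have h2 : s • e.hom.hom (e.inv.hom x) = 0 := by rw [← map_smul, h, map_zero]
    have h3 : e.hom.hom (e.inv.hom x) = x := e.inv_hom_id_apply x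
    rwa [h3] at h2
  · intro h x
    have h2 : s • e.inv.hom (e.hom.hom x) = 0 := by rw [← map_smul, h, map_zero]
    have h3 : e.inv.hom (e.hom.hom x) = x := e.hom_inv_id_apply x
    rwa [h3] at h2

lemma homology_smul_zero_iff {R : Type u} [CommRing R] (S : ShortComplex (ModuleCat.{u} R))
    (s : R) :
    (∀ x : S.homology, s • x = 0) ↔ ∀ z : S.X₂, S.g z = 0 → ∃ w : S.X₁, S.f w = s • z := by
  rw [smul_zero_iff_of_iso S.moduleCatHomologyIso s]
  change (∀ x : (LinearMap.ker S.g.hom ⧸ LinearMap.range S.moduleCatToCycles), s • x = 0) ↔ _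
  constructor
  · intro h z hz
    have := h (Submodule.Quotient.mk ⟨z, hz⟩)
    rw [← Submodule.Quotient.mk_smul, Submodule.Quotient.mk_eq_zero] at this
    obtain ⟨w, hw⟩ := this
    exact ⟨w, congrArg Subtype.val hw⟩
  · intro h x
    obtain ⟨⟨z, hz⟩, rfl⟩ := Submodule.Quotient.mk_surjective _ x
    rw [← Submodule.Quotient.mk_smul, Submodule.Quotient.mk_eq_zero]
    obtain ⟨w, hw⟩ := h z hz
    exact ⟨w, Subtype.ext hw⟩

lemma exists_tor_resolution {R : Type u} [CommRing R] (F : Type u) [AddCommGroup F] [Module R F] :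
    ∃ (P₂ P₁ P₀ : ModuleCat.{u} R) (d₂ : P₂ →ₗ[R] P₁) (d₁ : P₁ →ₗ[R] P₀) (p : P₀ →ₗ[R] F),
      Module.Flat R P₀ ∧ Function.Exact d₂ d₁ ∧ Function.Exact d₁ p ∧ Function.Surjective p ∧
      ∀ (N : Type u) [AddCommGroup N] [Module R N] (s : R),
        (∀ x : ((Tor (ModuleCat.{u} R) 1).obj (ModuleCat.of R N)).obj (ModuleCat.of R F),
          s • x = 0) ↔
        ∀ z : N ⊗[R] P₁, d₁.lTensor N z = 0 → ∃ w : N ⊗[R] P₂, d₂.lTensor N w = s • z := by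
  let P := projectiveResolution (ModuleCat.of R F)
  refine ⟨P.complex.X 2, P.complex.X 1, P.complex.X 0, (P.complex.d 2 1).hom,
    (P.complex.d 1 0).hom, (P.π.f 0).hom, ?_, ?_, ?_, ?_, ?_⟩
  · have : Module.Projective R (P.complex.X 0) :=
      (IsProjective.iff_projective (R := R) (P.complex.X 0)).2 (P.projective 0)
    infer_instance
  · exact (ShortComplex.ShortExact.moduleCat_exact_iff_function_exact _).1 (P.exact_succ 0)
  · exact (ShortComplex.ShortExact.moduleCat_exact_iff_function_exact _).1 (P.exact₀)
  · exact (ModuleCat.epi_iff_surjective (P.π.f 0)).1 inferInstance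
  · intro N _ _ s
    let G := (MonoidalCategory.tensoringLeft (ModuleCat.{u} R)).obj (ModuleCat.of R N)
    let C := (G.mapHomologicalComplex _).obj P.complex
    let e : ((Tor (ModuleCat.{u} R) 1).obj (ModuleCat.of R N)).obj (ModuleCat.of R F) ≅
      (C.sc' 2 1 0).homology := P.isoLeftDerivedObj G 1 ≪≫
        ShortComplex.homologyMapIso (C.isoSc' 2 1 0 (by simp) (by simp))
    have h1 := homology_smul_zero_iff (C.sc' 2 1 0) s
    exact (smul_zero_iff_of_iso e s).trans h1

section
variable {R : Type u} [CommRing R]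

/-- The submodule of `Fⁿ` generated by the `b • y` with `b ∈ K`, `y ∈ F`. -/
def TT (F : Type u) [AddCommGroup F] [Module R F] {n : ℕ} (K : Submodule R (Fin n → R)) :
    Submodule R (Fin n → F) :=
  Submodule.span R {v | ∃ b ∈ K, ∃ y : F, v = fun i => b i • y}

lemma mem_TT_iff {F : Type u} [AddCommGroup F] [Module R F] {n : ℕ}
    {K : Submodule R (Fin n → R)} {x : Fin n → F} :
    x ∈ TT F K ↔ ∃ (k : ℕ) (b : Fin k → Fin n → R) (y : Fin k → F),
      (∀ l, b l ∈ K) ∧ ∀ i, x i = ∑ l, b l i • y l := by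
  constructor
  · intro h
    obtain ⟨k, c, g, rfl⟩ := Submodule.mem_span_set'.1 h
    choose b hb y hy using fun l => (g l).2
    refine ⟨k, fun l => c l • b l, y, fun l => K.smul_mem _ (hb l), fun i => ?_⟩
    simp [hy, smul_smul]
  · rintro ⟨k, b, y, hb, hx⟩
    have : x = ∑ l, (fun i => b l i • y l) := by
      ext i; simp [hx]
    rw [this]
    exact Submodule.sum_mem _ fun l _ => Submodule.subset_span ⟨b l, hb l, y l, rfl⟩

/-- relations -/
abbrev RK {n : ℕ} (a : Fin n → R) : Submodule R (Fin n → R) :=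
  LinearMap.ker (Fintype.linearCombination R a)

/-- The almost version of the equational criterion of flatness. -/
def Crit (m : Ideal R) (F : Type u) [AddCommGroup F] [Module R F] : Prop :=
  ∀ s ∈ m, ∀ (n : ℕ) (a : Fin n → R) (x : Fin n → F), ∑ i, a i • x i = 0 → s • x ∈ TT F (RK a)

lemma crit_of_flat (m : Ideal R) (F : Type u) [AddCommGroup F] [Module R F] [Module.Flat R F] :
    Crit m F := by
  intro s _ n a x h
  refine Submodule.smul_mem _ _ ?_
  obtain ⟨k, b, y, h1, h2⟩ := Module.Flat.isTrivialRelation_of_sum_smul_eq_zero h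
  refine mem_TT_iff.2 ⟨k, fun l i => b i l, y, fun l => ?_, h1⟩
  rw [LinearMap.mem_ker, Fintype.linearCombination_apply, ← h2 l]
  simp [mul_comm]

lemma ideal_smul_top_sum {M : Type u} [AddCommGroup M] [Module R M] {n : ℕ} (a : Fin n → R)
    {v : M} (hv : v ∈ (Ideal.span (Set.range a) • ⊤ : Submodule R M)) :
    ∃ r : Fin n → M, v = ∑ i, a i • r i := by
  induction hv using Submodule.smul_induction_on' with
  | smul c hc v _ =>
    obtain ⟨c', rfl⟩ := (Submodule.mem_span_range_iff_exists_fun R).1 hc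
    exact ⟨fun i => c' i • v, by simp [Finset.sum_smul, smul_smul, mul_comm]⟩
  | add x _ y _ hx hy =>
    obtain ⟨r, rfl⟩ := hx
    obtain ⟨r', rfl⟩ := hy
    exact ⟨r + r', by simp [Finset.sum_add_distrib]⟩

lemma crit_of_almostFlat {m : Ideal R} {F : Type u} [AddCommGroup F] [Module R F]
    (hF : IsAlmostFlat m F) : Crit m F := by
  obtain ⟨P₂, P₁, P₀, d₂, d₁, p, hflat, h21, h10, hp, key⟩ := exists_tor_resolution (R := R) F
  intro s hs n a x hx
  choose q hq using fun i => hp (x i)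
  obtain ⟨q', hq'⟩ := (h10 (∑ i, a i • q i)).1 (by simp [hq, hx])
  let I := Ideal.span (Set.range a)
  have ha (i) : a i ∈ I := Ideal.subset_span ⟨i, rfl⟩
  obtain ⟨w, hw⟩ := (key (R ⧸ I) s).1 (hF (R ⧸ I) s hs) (1 ⊗ₜ q') (by
    rw [LinearMap.lTensor_tmul, hq', TensorProduct.tmul_sum]
    refine Finset.sum_eq_zero fun i _ => ?_
    rw [← TensorProduct.smul_tmul]
    have : a i • (1 : R ⧸ I) = 0 := by
      rw [Algebra.smul_def, mul_one]
      exact Ideal.Quotient.eq_zero_iff_mem.2 (ha i)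
    rw [this, TensorProduct.zero_tmul])
  obtain ⟨w', rfl⟩ : ∃ w' : P₂, (1 : R ⧸ I) ⊗ₜ[R] w' = w := by
    obtain ⟨w', hw'⟩ := Submodule.Quotient.mk_surjective _
      (TensorProduct.quotTensorEquivQuotSMul P₂ I w)
    refine ⟨w', ?_⟩
    rw [← TensorProduct.quotTensorEquivQuotSMul_symm_mk, hw', LinearEquiv.symm_apply_apply]
  rw [LinearMap.lTensor_tmul, ← TensorProduct.tmul_smul] at hw
  have h2 := congrArg (TensorProduct.quotTensorEquivQuotSMul P₁ I) hw
  rw [TensorProduct.quotTensorEquivQuotSMul_mk_one_tmul,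
    TensorProduct.quotTensorEquivQuotSMul_mk_one_tmul] at h2
  have h3 := (Submodule.Quotient.eq _).1 h2.symm
  obtain ⟨r, hr⟩ := ideal_smul_top_sum a h3
  have h4 : ∑ i, a i • (s • q i - d₁ (r i)) = 0 := by
    have h5 := congrArg d₁ hr
    rw [map_sub, map_smul, hq', h21.apply_apply_eq_zero, sub_zero, map_sum] at h5
    simp only [smul_sub, Finset.sum_sub_distrib, sub_eq_zero]
    simp only [map_smul] at h5
    rw [← h5, Finset.smul_sum]
    exact Finset.sum_congr rfl fun i _ => smul_comm _ _ _
  obtain ⟨k, b, y, h6, h7⟩ := Module.Flat.isTrivialRelation_of_sum_smul_eq_zero h4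
  refine mem_TT_iff.2 ⟨k, fun l i => b i l, fun l => p (y l), fun l => ?_, fun i => ?_⟩
  · rw [LinearMap.mem_ker, Fintype.linearCombination_apply, ← h7 l]
    simp [mul_comm]
  · have := congrArg p (h6 i)
    rw [map_sub, h10.apply_apply_eq_zero, sub_zero, map_smul, hq] at this
    simpa using this

lemma crit_rows {m : Ideal R} (hm : m * m = m) {F : Type u} [AddCommGroup F] [Module R F]
    (hF : Crit m F) (n : ℕ) (x : Fin n → F) (r : ℕ) : ∀ (A : Fin r → Fin n → R),
    (∀ q, ∑ i, A q i • x i = 0) → ∀ s ∈ m, s • x ∈ TT F (⨅ q, RK (A q)) := by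
  induction r with
  | zero =>
    intro A _ s _
    refine Submodule.smul_mem _ _ (mem_TT_iff.2 ⟨n, fun l => Pi.single l 1, x, by simp, ?_⟩)
    intro i
    simp [Pi.single_apply]
  | succ r ih =>
    intro A hA s hs
    rw [← hm] at hs
    induction hs using Submodule.mul_induction_on' with
    | mem_mul_mem s hs t ht =>
      obtain ⟨k, b, y, hb, hx⟩ := mem_TT_iff.1
        (ih (fun q => A q.castSucc) (fun q => hA q.castSucc) t ht)
      have h1 := hF s hs k (fun l => ∑ i, A (Fin.last r) i * b l i) y (by
        have : ∑ i, A (Fin.last r) i • (t • x) i = 0 := by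
          have := congrArg (t • ·) (hA (Fin.last r))
          simpa [Finset.smul_sum, smul_comm t] using this
        rw [← this]
        simp only [hx, Finset.sum_smul, Finset.smul_sum, smul_smul]
        rw [Finset.sum_comm])
      obtain ⟨k', c, z, hc, hy⟩ := mem_TT_iff.1 h1
      refine mem_TT_iff.2 ⟨k', fun e => ∑ l, c e l • b l, z, fun e => ?_, fun i => ?_⟩
      · rw [Submodule.mem_iInf]
        intro q
        induction q using Fin.lastCases with
        | last =>
          have := hc e
          rw [LinearMap.mem_ker, Fintype.linearCombination_apply] at this ⊢
          rw [← this]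
          simp only [Finset.sum_apply, Pi.smul_apply, smul_eq_mul, Finset.sum_mul, Finset.mul_sum]
          rw [Finset.sum_comm]
          exact Finset.sum_congr rfl fun _ _ => Finset.sum_congr rfl fun _ _ => by ring
        | cast q =>
          refine Submodule.sum_mem _ fun l _ => Submodule.smul_mem _ _ ?_
          exact (Submodule.mem_iInf _).1 (hb l) q
      · have h3 : (s * t) • x i = s • (t • x) i := by simp [mul_smul]
        rw [Pi.smul_apply, h3, hx, Finset.smul_sum]
        have h4 (l) : s • b l i • y l = ∑ e, (c e l • b l) i • z e := by
          rw [smul_comm]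
          have := hy l
          rw [Pi.smul_apply] at this
          rw [this, Finset.smul_sum]
          simp [smul_smul, mul_comm]
        simp only [h4, Finset.sum_apply, Finset.sum_smul]
        rw [Finset.sum_comm]
    | add s _ t _ hs ht => rw [add_smul]; exact add_mem hs ht

lemma almostFlat_of_crit {m : Ideal R} (hm : m * m = m) {F : Type u} [AddCommGroup F] [Module R F]
    (hF : Crit m F) : IsAlmostFlat m F := by
  obtain ⟨P₂, P₁, P₀, d₂, d₁, p, hflat, h21, h10, hp, key⟩ := exists_tor_resolution (R := R) F
  intro N _ _ s hs
  rw [key]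
  intro z hz
  obtain ⟨r, ν, q, rfl⟩ := TensorProduct.exists_sum_tmul_eq z
  simp only [map_sum, LinearMap.lTensor_tmul] at hz
  obtain ⟨k, b, y, h1, h2⟩ :=
    TensorProduct.vanishesTrivially_of_sum_tmul_eq_zero_of_rTensor_injective R
      (Module.Flat.rTensor_preserves_injective_linearMap _ (Submodule.injective_subtype _)) hz
  replace h1 : ∀ i, d₁ (q i) = ∑ j, b i j • y j := h1
  have h3 := crit_rows hm hF k (fun j => p (y j)) r b (fun i => by
    have := congrArg p (h1 i)
    rw [h10.apply_apply_eq_zero] at this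
    simpa using this.symm) s hs
  obtain ⟨k', c, f, hc, hx⟩ := mem_TT_iff.1 h3
  choose g hg using fun l => hp (f l)
  have h4 (j) : ∃ ρ, d₁ ρ = s • y j - ∑ l, c l j • g l := by
    refine (h10 _).1 ?_
    have := hx j
    rw [Pi.smul_apply] at this
    simp [hg, this]
  choose ρ hρ using h4
  have h5 (i) : ∃ w, d₂ w = s • q i - ∑ j, b i j • ρ j := by
    refine (h21 _).1 ?_
    rw [map_sub, map_smul, h1, map_sum]
    simp only [map_smul, hρ, smul_sub, Finset.sum_sub_distrib]
    have h6 : ∑ j, b i j • ∑ l, c l j • g l = 0 := by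
      simp only [Finset.smul_sum, smul_smul]
      rw [Finset.sum_comm]
      refine Finset.sum_eq_zero fun l _ => ?_
      rw [← Finset.sum_smul]
      have := (Submodule.mem_iInf _).1 (hc l) i
      rw [LinearMap.mem_ker, Fintype.linearCombination_apply] at this
      simp only [smul_eq_mul, mul_comm (c l _)] at this
      rw [this, zero_smul]
    rw [h6, sub_zero, Finset.smul_sum, sub_eq_zero]
    exact Finset.sum_congr rfl fun _ _ => smul_comm _ _ _
  choose w hw using h5
  refine ⟨∑ i, ν i ⊗ₜ w i, ?_⟩
  simp only [map_sum, LinearMap.lTensor_tmul, hw, TensorProduct.tmul_sub, Finset.sum_sub_distrib]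
  have h7 : ∑ i, ν i ⊗ₜ[R] (∑ j, b i j • ρ j) = 0 := by
    simp only [TensorProduct.tmul_sum, ← TensorProduct.smul_tmul]
    rw [Finset.sum_comm]
    refine Finset.sum_eq_zero fun j _ => ?_
    rw [← TensorProduct.sum_tmul, h2, TensorProduct.zero_tmul]
  rw [h7, sub_zero, Finset.smul_sum]
  simp

lemma coherent_of_crit {m : Ideal R} (h : ∀ ι : Type u, Crit m (ι → R)) : IsAlmostCoherent m := by
  intro I hI s hs t ht
  obtain ⟨n, f, hf⟩ := hI s hs
  let e (i : Fin n) : Fin n → R := fun j => if i = j then 1 else 0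
  let a (i : Fin n) : R := f (e i)
  have hfa (v) : (f v : R) = Fintype.linearCombination R a v := by
    rw [f.pi_apply_eq_sum_univ, Fintype.linearCombination_apply]
    simp [a, e]
  have h1 := h (LinearMap.ker f) t ht n a (fun j v => v.1 j) (by
    ext v
    have := hfa v.1
    rw [LinearMap.mem_ker.1 v.2, Fintype.linearCombination_apply] at this
    simpa [mul_comm] using this.symm)
  obtain ⟨k, b, y, hb, hy⟩ := mem_TT_iff.1 h1
  refine ⟨n, k, Fintype.linearCombination R b, f, ?_, hf, ?_⟩
  · ext v
    simp only [LinearMap.comp_apply, LinearMap.zero_apply]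
    rw [hfa]
    have : Fintype.linearCombination R b (Pi.single v 1) ∈ RK a := by
      simpa using hb v
    simpa using this
  · intro v hv
    refine ⟨fun l => y l ⟨v, hv⟩, ?_⟩
    ext i
    have := congrFun (hy i) ⟨v, hv⟩
    simp only [Pi.smul_apply, Finset.sum_apply, smul_eq_mul] at this
    rw [Fintype.linearCombination_apply]
    simp [this, mul_comm]

lemma relations_almost_fg {m : Ideal R} (hm : m * m = m) (h : IsAlmostCoherent m) {n : ℕ}
    (a : Fin n → R) (s : R) (hs : s ∈ m) :
    ∃ K₀ : Submodule R (Fin n → R), K₀.FG ∧ K₀ ≤ RK a ∧ ∀ v ∈ RK a, s • v ∈ K₀ := by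
  rw [← hm] at hs
  induction hs using Submodule.mul_induction_on' with
  | add s _ t _ hs ht =>
    obtain ⟨K, h1, h2, h3⟩ := hs
    obtain ⟨K', h1', h2', h3'⟩ := ht
    refine ⟨K ⊔ K', h1.sup h1', sup_le h2 h2', fun v hv => ?_⟩
    rw [add_smul]
    exact Submodule.add_mem_sup (h3 v hv) (h3' v hv)
  | mem_mul_mem t ht s hs =>
    let I : Ideal R := LinearMap.range (Fintype.linearCombination R a)
    let π : (Fin n → R) →ₗ[R] I := (Fintype.linearCombination R a).rangeRestrict
    have hπ : Function.Surjective π := LinearMap.surjective_rangeRestrict _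
    have hker : LinearMap.ker π = RK a := LinearMap.ker_rangeRestrict _
    obtain ⟨p, k, g, f, hfg, hf, hkf⟩ := h I (fun s _ => ⟨n, π, fun y => hπ _⟩) s hs t ht
    obtain ⟨η, hη⟩ := Module.projective_lifting_property π f hπ
    have hex (i : Fin n) : ∃ u, f u = s • π (Pi.single i 1) := hf _
    choose u hu using hex
    let η' : (Fin n → R) →ₗ[R] (Fin p → R) := Fintype.linearCombination R u
    have hη' : f ∘ₗ η' = s • π := by
      refine LinearMap.pi_ext' fun i => LinearMap.ext_ring ?_
      simp [η', hu]
    have e1 (v) : π (η v) = f v := LinearMap.congr_fun hη v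
    have e2 (v) : f (η' v) = s • π v := LinearMap.congr_fun hη' v
    have e3 (v) : f (g v) = 0 := LinearMap.congr_fun hfg v
    refine ⟨LinearMap.range (s • (LinearMap.id : (Fin n → R) →ₗ[R] (Fin n → R)) - η ∘ₗ η') ⊔ LinearMap.range (η ∘ₗ g),
      (Module.Finite.iff_fg.1 inferInstance).sup (Module.Finite.iff_fg.1 inferInstance),
      sup_le ?_ ?_, ?_⟩
    · rintro _ ⟨v, rfl⟩
      rw [← hker]
      simp [e1, e2]
    · rintro _ ⟨v, rfl⟩
      rw [← hker]
      simp [e1, e3]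
    · intro v hv
      rw [← hker, LinearMap.mem_ker] at hv
      obtain ⟨w, hw⟩ := hkf (η' v) (by rw [LinearMap.mem_ker, e2, hv, smul_zero])
      have : (t * s) • v =
          (s • (LinearMap.id : (Fin n → R) →ₗ[R] (Fin n → R)) - η ∘ₗ η') (t • v) + (η ∘ₗ g) w := by
        simp [hw, mul_smul, smul_sub]
      rw [this]
      exact Submodule.add_mem_sup ⟨_, rfl⟩ ⟨_, rfl⟩

lemma TT_smul_uniform {F : Type u} [AddCommGroup F] [Module R F] {n q : ℕ}
    {K : Submodule R (Fin n → R)} (c : Fin q → Fin n → R) (s : R)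
    (h : ∀ v ∈ K, s • v ∈ Submodule.span R (Set.range c)) {x : Fin n → F} (hx : x ∈ TT F K) :
    ∃ z : Fin q → F, ∀ i, s • x i = ∑ l, c l i • z l := by
  induction hx using Submodule.span_induction with
  | mem x hx =>
    obtain ⟨b, hb, y, rfl⟩ := hx
    obtain ⟨d, hd⟩ := (Submodule.mem_span_range_iff_exists_fun R).1 (h b hb)
    refine ⟨fun l => d l • y, fun i => ?_⟩
    have := congrFun hd i
    simp only [Finset.sum_apply, Pi.smul_apply, smul_eq_mul] at this
    simp only [smul_smul, ← this, ← Finset.sum_smul, mul_comm]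
  | zero => exact ⟨0, by simp⟩
  | add x y _ _ hx hy =>
    obtain ⟨z, hz⟩ := hx
    obtain ⟨z', hz'⟩ := hy
    exact ⟨z + z', by simp [hz, hz', Finset.sum_add_distrib]⟩
  | smul r x _ hx =>
    obtain ⟨z, hz⟩ := hx
    refine ⟨r • z, fun i => ?_⟩
    simp only [Pi.smul_apply]
    rw [smul_comm, hz, Finset.smul_sum]
    exact Finset.sum_congr rfl fun _ _ => smul_comm _ _ _

lemma crit_pi {m : Ideal R} (hm : m * m = m) (h : IsAlmostCoherent m) (ι : Type u)
    (F : ι → Type u) [∀ i, AddCommGroup (F i)] [∀ i, Module R (F i)] (hF : ∀ i, Crit m (F i)) :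
    Crit m (∀ i, F i) := by
  intro s hs n a x hx
  rw [← hm] at hs
  induction hs using Submodule.mul_induction_on' with
  | add s _ t _ hs ht => rw [add_smul]; exact add_mem hs ht
  | mem_mul_mem s hs t ht =>
    obtain ⟨K₀, hfg, hle, hK⟩ := relations_almost_fg hm h a s hs
    obtain ⟨q, c, rfl⟩ := Submodule.fg_iff_exists_fin_generating_family.1 hfg
    have h1 (i : ι) : ∃ z : Fin q → F i, ∀ j, s • (t • fun j => x j i) j = ∑ l, c l j • z l :=
      TT_smul_uniform c s hK (hF i t ht n a (fun j => x j i) (by simpa using congrFun hx i))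
    choose z hz using h1
    refine mem_TT_iff.2 ⟨q, c, fun l i => z i l, fun l => hle (Submodule.subset_span ⟨l, rfl⟩), ?_⟩
    intro j
    ext i
    have := hz i j
    simp only [Pi.smul_apply] at this
    simp [mul_smul, this]

end

/-- `R` is almost coherent iff products of almost flat (resp. flat,
projective, copies of `R`) modules are almost flat. -/
theorem almostCoherent_iff_products_almostFlat
    {R : Type u} [CommRing R] (m : Ideal R) (hm : m * m = m) :
    -- (1) ↔ (2)
    ((IsAlmostCoherent m ↔
      (∀ (ι : Type u) (F : ι → Type u) [∀ i, AddCommGroup (F i)] [∀ i, Module R (F i)],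
        (∀ i, IsAlmostFlat m (F i)) → IsAlmostFlat m (∀ i, F i))) ∧
    -- (1) ↔ (3)
    (IsAlmostCoherent m ↔
      (∀ (ι : Type u) (F : ι → Type u) [∀ i, AddCommGroup (F i)] [∀ i, Module R (F i)],
        (∀ i, Module.Flat R (F i)) → IsAlmostFlat m (∀ i, F i))) ∧
    -- (1) ↔ (4)
    (IsAlmostCoherent m ↔
      (∀ (ι : Type u) (F : ι → Type u) [∀ i, AddCommGroup (F i)] [∀ i, Module R (F i)],
        (∀ i, Module.Projective R (F i)) → IsAlmostFlat m (∀ i, F i))) ∧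
    -- (1) ↔ (5)
    (IsAlmostCoherent m ↔ (∀ ι : Type u, IsAlmostFlat m (ι → R)))) := by

  have h12 : IsAlmostCoherent m →
      (∀ (ι : Type u) (F : ι → Type u) [∀ i, AddCommGroup (F i)] [∀ i, Module R (F i)],
        (∀ i, IsAlmostFlat m (F i)) → IsAlmostFlat m (∀ i, F i)) :=
    fun h ι F _ _ hF => almostFlat_of_crit hm (crit_pi hm h ι F fun i => crit_of_almostFlat (hF i))
  have h51 : (∀ ι : Type u, IsAlmostFlat m (ι → R)) → IsAlmostCoherent m :=
    fun h => coherent_of_crit fun ι => crit_of_almostFlat (h ι)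
  have hfl : ∀ (F : Type u) [AddCommGroup F] [Module R F], Module.Flat R F → IsAlmostFlat m F :=
    fun F _ _ _ => almostFlat_of_crit hm (crit_of_flat m F)
  refine ⟨⟨h12, fun h => h51 fun ι => ?_⟩, ⟨fun h ι F _ _ hF => ?_, fun h => h51 fun ι => ?_⟩,
    ⟨fun h ι F _ _ hF => ?_, fun h => h51 fun ι => ?_⟩, ⟨fun h ι => ?_, h51⟩⟩
  · exact h ι (fun _ => R) fun _ => hfl R inferInstance
  · exact h12 h ι F fun i => hfl _ (hF i)
  · exact h ι (fun _ => R) fun _ => inferInstance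
  · exact h12 h ι F fun i => hfl _ (have := hF i; inferInstance)
  · exact h ι (fun _ => R) fun _ => inferInstance
  · exact h12 h ι (fun _ => R) fun i => hfl _ inferInstance
end
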